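/- Let κ : N₁ ⥤ N₂ be a contraction between nested graphs, let A₂ be a node of N₂, and let A₁ be the unique vertex of the fiber κ⁻¹(A₂). Then for every flag f₂ : A₂ → B₂ in N₂ there exists a flag f₁ : A₁ → B₁ in N₁, not contracted by κ, such that κ(f₁) divides f₂, i.e., f₂ = h ∘ κ(f₁) for some morphism h of N₂. -/

import Mathlib

open CategoryTheory

universe v u

/-- A morphism in a category is an identity morphism (up to `eqToHom`). -/
def IsId {C : Type u} [Category.{v} C] {A B : C} (f : A ⟶ B) : Prop :=
  ∃ h : A = B, f = eqToHom h

/-- A flag in a nested graph is a non-identity morphism. -/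
def IsFlag {C : Type u} [Category.{v} C] {A B : C} (f : A ⟶ B) : Prop :=
  ¬ IsId f

/-- An irreducible flag is a flag that cannot be written as the composite of two flags. -/
def IsIrred {C : Type u} [Category.{v} C] {A B : C} (f : A ⟶ B) : Prop :=
  IsFlag f ∧ ¬ ∃ (X : C) (g : A ⟶ X) (h : X ⟶ B), IsFlag g ∧ IsFlag h ∧ g ≫ h = f

/-- A grading: a functor to the finite ordinal `Fin n` (viewed as a preorder category)
sending every non-identity morphism to a non-identity morphism. -/
def IsGrading {C : Type u} [Category.{v} C] {n : ℕ} (G : C ⥤ Fin n) : Prop :=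
  ∀ ⦃A B : C⦄ (f : A ⟶ B), IsFlag f → IsFlag (G.map f)

/-- A nested graph: a category admitting a grading into some finite ordinal. -/
def IsNestedGraph (C : Type u) [Category.{v} C] : Prop :=
  ∃ (n : ℕ) (G : C ⥤ Fin n), IsGrading G

/-- A functor `φ` contracts a flag `f` if `φ.map f` is an identity. -/
def Contracts {C D : Type u} [Category.{v} C] [Category.{v} D]
    (φ : C ⥤ D) {A B : C} (f : A ⟶ B) : Prop :=
  IsId (φ.map f)

/-- An admissible functor: it maps irreducible flags to identities or irreducible flags,
and whenever it contracts an irreducible flag with domain `A`, it contracts every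
irreducible flag with domain `A`. -/
def IsAdmissible {C D : Type u} [Category.{v} C] [Category.{v} D] (φ : C ⥤ D) : Prop :=
  (∀ ⦃A B : C⦄ (f : A ⟶ B), IsIrred f → IsId (φ.map f) ∨ IsIrred (φ.map f)) ∧
  (∀ ⦃A B B' : C⦄ (f : A ⟶ B) (g : A ⟶ B'), IsIrred f → IsIrred g →
      Contracts φ f → Contracts φ g)

/-- The morphisms of the codomain generated by the image of a functor. -/
inductive GenBy {C D : Type u} [Category.{v} C] [Category.{v} D] (φ : C ⥤ D) :
    ∀ {X Y : D}, (X ⟶ Y) → Prop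
  | id (X : D) : GenBy φ (𝟙 X)
  | map {A B : C} (f : A ⟶ B) : GenBy φ (φ.map f)
  | comp {X Y Z : D} (f : X ⟶ Y) (g : Y ⟶ Z) :
      GenBy φ f → GenBy φ g → GenBy φ (f ≫ g)

/-- An epi-functor: its image generates the codomain. -/
def IsEpiFunctor {C D : Type u} [Category.{v} C] [Category.{v} D] (φ : C ⥤ D) : Prop :=
  Function.Surjective φ.obj ∧ ∀ ⦃X Y : D⦄ (f : X ⟶ Y), GenBy φ f

/-- `μ : C ⥤ D` exhibits `D` as the quotient of `C` identifying `r`-related objects,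
with morphisms freely generated by the morphisms of `C` subject to the composition
relations of `C` (expressed via the universal property). -/
def IsQuotientBy {C D : Type u} [Category.{v} C] [Category.{v} D]
    (r : C → C → Prop) (μ : C ⥤ D) : Prop :=
  (∀ A B : C, μ.obj A = μ.obj B ↔ Relation.EqvGen r A B) ∧
  Function.Surjective μ.obj ∧
  (∀ ⦃X Y : D⦄ (f : X ⟶ Y), GenBy μ f) ∧
  (∀ (E : Type u) [Category.{v} E] (F : C ⥤ E),
      (∀ A B : C, r A B → F.obj A = F.obj B) → ∃! F' : D ⥤ E, μ ⋙ F' = F)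

/-- A merger: an admissible epi-functor exhibiting its codomain as the quotient of its
domain by an equivalence relation on objects, with morphisms freely generated subject to
the composition relations of the domain. -/
def IsMerger {C D : Type u} [Category.{v} C] [Category.{v} D] (μ : C ⥤ D) : Prop :=
  IsAdmissible μ ∧ IsEpiFunctor μ ∧
    ∃ r : C → C → Prop, Equivalence r ∧ IsQuotientBy r μ

/-- `A` is a vertex of its fiber under `φ`: it is not the domain of any flag
contracted by `φ`. -/
def IsVertexOver {C D : Type u} [Category.{v} C] [Category.{v} D]
    (φ : C ⥤ D) (A : C) : Prop :=
  ∀ ⦃B : C⦄ (f : A ⟶ B), Contracts φ f → IsId f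

/-- `A₁` is a vertex of the fiber of `φ` over `A₂`. -/
def IsFiberVertex {C D : Type u} [Category.{v} C] [Category.{v} D]
    (φ : C ⥤ D) (A₂ : D) (A₁ : C) : Prop :=
  φ.obj A₁ = A₂ ∧ IsVertexOver φ A₁

/-- A contraction: an admissible epi-functor each of whose fibers is a corolla,
i.e. has a unique vertex. -/
def IsContraction {C D : Type u} [Category.{v} C] [Category.{v} D] (κ : C ⥤ D) : Prop :=
  IsAdmissible κ ∧ IsEpiFunctor κ ∧ ∀ A₂ : D, ∃! A₁ : C, IsFiberVertex κ A₂ A₁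

/-- The canonical merger relation of `φ`: it relates distinct objects `A ≠ B` exactly when
`φ A = φ B` and both `A` and `B` are vertices of the fiber of `φ` over `φ A`. -/
def mergerRel {C D : Type u} [Category.{v} C] [Category.{v} D] (φ : C ⥤ D) :
    C → C → Prop :=
  fun A B => A ≠ B ∧ φ.obj A = φ.obj B ∧ IsVertexOver φ A ∧ IsVertexOver φ B

/-- A canonical merger–contraction decomposition of `φ`: the merger part is the quotient
of the domain identifying, within each fiber of `φ`, all objects that are vertices of that
fiber. -/
def IsCanonicalDecomp {C P D : Type u} [Category.{v} C] [Category.{v} P] [Category.{v} D]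
    (φ : C ⥤ D) (μ : C ⥤ P) (κ : P ⥤ D) : Prop :=
  IsQuotientBy (mergerRel φ) μ ∧ μ ⋙ κ = φ

/-- Two merger–contraction pairs are equal as morphisms of nested graphs: one is obtained
from the other by shifting an isomorphism from the merger to the contraction. -/
def PairEquiv {A B P P' : Type u} [Category.{v} A] [Category.{v} B]
    [Category.{v} P] [Category.{v} P']
    (μ : A ⥤ P) (κ : P ⥤ B) (μ' : A ⥤ P') (κ' : P' ⥤ B) : Prop :=
  ∃ (e : P ⥤ P') (e' : P' ⥤ P), e ⋙ e' = 𝟭 P ∧ e' ⋙ e = 𝟭 P' ∧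
    μ ⋙ e = μ' ∧ e ⋙ κ' = κ

/-- A category contains no cycle of flags. -/
def NoFlagCycles (C : Type u) [Category.{v} C] : Prop :=
  ∀ (k : ℕ), 0 < k → ∀ (obj : Fin (k + 1) → C)
    (flag : ∀ i : Fin k, obj i.castSucc ⟶ obj i.succ),
    (∀ i, IsFlag (flag i)) → obj 0 ≠ obj (Fin.last k)

theorem IsId.map {C D : Type u} [Category.{v} C] [Category.{v} D] (φ : C ⥤ D)
    {A B : C} {f : A ⟶ B} (hf : IsId f) : IsId (φ.map f) := by
  obtain ⟨rfl, rfl⟩ := hf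
  exact ⟨rfl, by simp⟩

/-- A grading is strictly increasing along flags. -/
theorem IsGrading.lt {C : Type u} [Category.{v} C] {n : ℕ} {G : C ⥤ Fin n}
    (hG : IsGrading G) {A B : C} (f : A ⟶ B) (hf : IsFlag f) : G.obj A < G.obj B :=
  lt_of_le_of_ne (leOfHom (G.map f)) fun h => hG f hf ⟨h, Subsingleton.elim _ _⟩

/-- In a nested graph, the first factor of an identity is an identity. -/
theorem IsNestedGraph.isId_of_comp {C : Type u} [Category.{v} C] (hC : IsNestedGraph C)
    {A B X : C} {g : A ⟶ X} {h : X ⟶ B} (hgh : IsId (g ≫ h)) : IsId g := by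
  obtain ⟨n, G, hG⟩ := hC
  by_contra hg
  obtain ⟨rfl, -⟩ := hgh
  exact absurd (hG.lt g hg) (not_lt_of_ge (leOfHom (G.map h)))

/-- Every flag of a nested graph starts with an irreducible flag. -/
theorem IsNestedGraph.exists_irred_comp {C : Type u} [Category.{v} C] (hC : IsNestedGraph C)
    {A B : C} (f : A ⟶ B) (hf : IsFlag f) :
    ∃ (X : C) (g : A ⟶ X) (h : X ⟶ B), IsIrred g ∧ g ≫ h = f := by
  obtain ⟨n, G, hG⟩ := hC
  induction hk : G.obj B using WellFoundedLT.induction generalizing B with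
  | ind k ih =>
    subst hk
    by_cases hirr : IsIrred f
    · exact ⟨B, f, 𝟙 B, hirr, Category.comp_id f⟩
    · obtain ⟨X, g, h, hg, hh, rfl⟩ := not_not.mp fun hn => hirr ⟨hf, hn⟩
      obtain ⟨Y, p, q, hp, rfl⟩ := ih _ (hG.lt h hh) g hg rfl
      exact ⟨Y, p, q ≫ h, hp, by simp⟩

/-- The domain of a morphism which is not contracted by an admissible functor can be moved to
a vertex of its fiber without changing the image. -/
theorem IsAdmissible.exists_vertex_lift {C D : Type u} [Category.{v} C] [Category.{v} D]
    (hC : IsNestedGraph C) (hD : IsNestedGraph D) {φ : C ⥤ D} (hφ : IsAdmissible φ)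
    {A B : C} (f : A ⟶ B) (hf : ¬ Contracts φ f) :
    ∃ (A' : C) (f' : A' ⟶ B) (e : φ.obj A' = φ.obj A),
      IsVertexOver φ A' ∧ φ.map f' = eqToHom e ≫ φ.map f := by
  obtain ⟨n, G, hG⟩ := id hC
  induction hk : G.obj A using WellFoundedGT.induction generalizing A with
  | ind k ih =>
    subst hk
    by_cases hA : IsVertexOver φ A
    · exact ⟨A, f, rfl, hA, by simp⟩
    · simp only [IsVertexOver, not_forall] at hA
      obtain ⟨E, c, hc, hcflag⟩ := hA
      obtain ⟨Y, p, q, hp, rfl⟩ := hC.exists_irred_comp c hcflag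
      obtain ⟨X, g, h, hg, rfl⟩ := hC.exists_irred_comp f fun hid => hf (hid.map φ)
      have hpc : Contracts φ p :=
        hD.isId_of_comp (h := φ.map q) (by rw [← φ.map_comp]; exact hc)
      obtain ⟨e, he⟩ := hφ.2 p g hp hg hpc
      have hmap : φ.map (g ≫ h) = eqToHom e ≫ φ.map h := by rw [φ.map_comp, he]
      have hh : ¬ Contracts φ h := by
        rintro ⟨e', he'⟩
        exact hf ⟨e.trans e', by rw [hmap, he', eqToHom_trans]⟩
      obtain ⟨A', f', e', hA', hf'⟩ := ih _ (hG.lt g hg.1) h hh rfl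
      exact ⟨A', f', e'.trans e.symm, hA', by rw [hmap, hf', eqToHom_trans_assoc]⟩

/-- A generated flag is divided by the image of a morphism which is not contracted. -/
theorem GenBy.exists_map_comp {C D : Type u} [Category.{v} C] [Category.{v} D] {φ : C ⥤ D}
    {X Y : D} {f : X ⟶ Y} (hgen : GenBy φ f) (hf : IsFlag f) :
    ∃ (A B : C) (g : A ⟶ B) (e : φ.obj A = X) (h : φ.obj B ⟶ Y),
      ¬ Contracts φ g ∧ φ.map g ≫ h = eqToHom e ≫ f := by
  induction hgen with
  | id X => exact absurd ⟨rfl, rfl⟩ hf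
  | map g => exact ⟨_, _, g, rfl, 𝟙 _, hf, by simp⟩
  | comp p q _ _ ihp ihq =>
    by_cases hp : IsId p
    · obtain ⟨rfl, rfl⟩ := hp
      simp only [eqToHom_refl, Category.id_comp] at hf ⊢
      exact ihq hf
    · obtain ⟨A, B, g, e, h, hg, hgh⟩ := ihp hp
      exact ⟨A, B, g, e, h ≫ q, hg, by rw [← Category.assoc, hgh, Category.assoc]⟩

/-- if `κ : N₁ ⥤ N₂` is a contraction, `A₂` a node of `N₂` and `A₁` the
vertex of the fiber `κ⁻¹ A₂`, then every flag `f₂ : A₂ ⟶ B₂` is divided by the image of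
some flag `f₁ : A₁ ⟶ B₁` not contracted by `κ`, i.e. `f₂ = h ∘ κ(f₁)` for some `h`. -/
theorem contraction_flag_divides {N₁ N₂ : Type u}
    [Category.{v} N₁] [Category.{v} N₂]
    (h₁ : IsNestedGraph N₁) (h₂ : IsNestedGraph N₂)
    (κ : N₁ ⥤ N₂) (hκ : IsContraction κ)
    (A₂ : N₂) (A₁ : N₁) (hA₁ : IsFiberVertex κ A₂ A₁)
    {B₂ : N₂} (f₂ : A₂ ⟶ B₂) (hf₂ : IsFlag f₂) :
    ∃ (B₁ : N₁) (f₁ : A₁ ⟶ B₁), IsFlag f₁ ∧ ¬ Contracts κ f₁ ∧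
      ∃ h : κ.obj B₁ ⟶ B₂, κ.map f₁ ≫ h = eqToHom hA₁.1 ≫ f₂ := by
  obtain ⟨A, B, g, e, h, hg, hgh⟩ := (hκ.2.1.2 f₂).exists_map_comp hf₂
  obtain ⟨A', g', e', hA', hg'⟩ := hκ.1.exists_vertex_lift h₁ h₂ g hg
  obtain rfl := (hκ.2.2 A₂).unique ⟨e'.trans e, hA'⟩ hA₁
  have hg'c : ¬ Contracts κ g' := by
    rintro ⟨c, hc⟩
    refine hg ⟨e'.symm.trans c, ?_⟩
    rw [← eqToHom_trans e'.symm c, ← hc, hg', eqToHom_trans_assoc, eqToHom_refl,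
      Category.id_comp]
  exact ⟨B, g', fun hid => hg'c (hid.map κ), hg'c, h, by
    rw [hg', Category.assoc, hgh, eqToHom_trans_assoc]⟩
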